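/- arXiv:1312.2153 — 4 statements merged into one kernel-verified Lean document; each statement's English description precedes it below -/
import Mathlib

section
/- For every x > 0, P(ρ|X| + √(1-ρ²)·Y > x) = P(R·cos(Θ - ψ) > x, Θ - ψ ∈ (-π/2, π/2 - ψ)) + P(-R·cos(Θ + ψ) > x, Θ ∈ (π/2, π) ∪ (-π, -π/2 - ψ)), where ψ = arccos ρ. -/
open MeasureTheory Filter Real Set ProbabilityTheory Topology

/-!
Write `ρ = cos ψ` with `ψ ∈ [0, π]`, so that `√(1 - ρ²) = sin ψ`, and split according to whether
`Θ ∈ [-π/2, π/2]`, that is, according to the sign of `X = R cos Θ`. Where `X ≥ 0`, the addition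
formula turns `ρ|X| + √(1 - ρ²) Y` into `R cos (Θ - ψ)`; where `X ≤ 0`, it turns it into
`-R cos (Θ + ψ)`. As `R ≥ 0` and `x ≥ 0`, these can exceed `x` only where the cosine is positive,
respectively negative, which cuts the range of `Θ` down to the stated intervals. Away from the null
event `Θ = π/2`, the resulting identity of events holds pointwise.
-/

section Trigonometry

variable {r x θ ψ : ℝ}

lemma cos_mul_abs_add_sin_mul_of_cos_nonneg (hr : 0 ≤ r) (hθ : 0 ≤ cos θ) :
    cos ψ * |r * cos θ| + sin ψ * (r * sin θ) = r * cos (θ - ψ) := by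
  rw [abs_of_nonneg (mul_nonneg hr hθ), cos_sub]
  ring

lemma cos_mul_abs_add_sin_mul_of_cos_nonpos (hr : 0 ≤ r) (hθ : cos θ ≤ 0) :
    cos ψ * |r * cos θ| + sin ψ * (r * sin θ) = -(r * cos (θ + ψ)) := by
  rw [abs_of_nonpos (mul_nonpos_of_nonneg_of_nonpos hr hθ), cos_add]
  ring

lemma cos_nonpos_of_le_neg_pi_div_two (hlower : -(π + π / 2) ≤ θ) (hupper : θ ≤ -(π / 2)) :
    cos θ ≤ 0 := by
  rw [← cos_neg]
  exact cos_nonpos_of_pi_div_two_le_of_le (by linarith) (by linarith)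

lemma neg_pi_div_two_lt_of_cos_pos (hθ : -(π + π / 2) ≤ θ) (hcos : 0 < cos θ) : -(π / 2) < θ := by
  contrapose! hcos
  exact cos_nonpos_of_le_neg_pi_div_two hθ hcos

lemma lt_neg_pi_div_two_of_cos_neg (hθ : θ ≤ π / 2) (hcos : cos θ < 0) : θ < -(π / 2) := by
  contrapose! hcos
  exact cos_nonneg_of_neg_pi_div_two_le_of_le hcos hθ

lemma cos_nonpos_of_notMem_Icc (hθ : θ ∈ Icc (-(π + π / 2)) (π + π / 2))
    (hθ' : θ ∉ Icc (-(π / 2)) (π / 2)) : cos θ ≤ 0 := by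
  obtain hlt | hgt : θ < -(π / 2) ∨ π / 2 < θ := by
    simpa only [mem_Icc, not_and_or, not_le] using hθ'
  · exact cos_nonpos_of_le_neg_pi_div_two hθ.1 hlt.le
  · exact cos_nonpos_of_pi_div_two_le_of_le hgt.le hθ.2

lemma lt_cos_mul_abs_add_sin_mul_and_mem_Icc_iff (hr : 0 ≤ r) (hx : 0 ≤ x) (hψ : ψ ∈ Icc 0 π)
    (hθ : θ ≠ π / 2) :
    (x < cos ψ * |r * cos θ| + sin ψ * (r * sin θ) ∧ θ ∈ Icc (-(π / 2)) (π / 2)) ↔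
      x < r * cos (θ - ψ) ∧ θ - ψ ∈ Ioo (-(π / 2)) (π / 2 - ψ) := by
  have formula (h : θ ∈ Icc (-(π / 2)) (π / 2)) :=
    cos_mul_abs_add_sin_mul_of_cos_nonneg (ψ := ψ) hr (cos_nonneg_of_mem_Icc h)
  constructor
  · rintro ⟨hlt, hmem⟩
    rw [formula hmem] at hlt
    have hcos : 0 < cos (θ - ψ) := pos_of_mul_pos_right (hx.trans_lt hlt) hr
    have hlower : -(π / 2) < θ - ψ :=
      neg_pi_div_two_lt_of_cos_pos (by linarith [hmem.1, hψ.2]) hcos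
    exact ⟨hlt, hlower, sub_lt_sub_right (hmem.2.lt_of_ne hθ) ψ⟩
  · rintro ⟨hlt, hlower, hupper⟩
    have hmem : θ ∈ Icc (-(π / 2)) (π / 2) := ⟨by linarith [hψ.1], by linarith⟩
    exact ⟨(formula hmem).symm ▸ hlt, hmem⟩

lemma lt_cos_mul_abs_add_sin_mul_and_notMem_Icc_iff (hr : 0 ≤ r) (hx : 0 ≤ x) (hψ : ψ ∈ Icc 0 π)
    (hθ : θ ∈ Ioo (-π) π) :
    (x < cos ψ * |r * cos θ| + sin ψ * (r * sin θ) ∧ θ ∉ Icc (-(π / 2)) (π / 2)) ↔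
      x < -(r * cos (θ + ψ)) ∧ θ ∈ Ioo (π / 2) π ∪ Ioo (-π) (-(π / 2) - ψ) := by
  have formula (h : θ ∉ Icc (-(π / 2)) (π / 2)) :=
    cos_mul_abs_add_sin_mul_of_cos_nonpos (ψ := ψ) hr <|
      cos_nonpos_of_notMem_Icc ⟨by linarith [hθ.1, pi_pos], by linarith [hθ.2, pi_pos]⟩ h
  constructor
  · rintro ⟨hlt, hmem⟩
    rw [formula hmem] at hlt
    refine ⟨hlt, ?_⟩
    obtain hleft | hright : θ < -(π / 2) ∨ π / 2 < θ := by
      simpa only [mem_Icc, not_and_or, not_le] using hmem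
    · have hcos : cos (θ + ψ) < 0 := neg_of_mul_neg_right (by linarith) hr
      have hupper : θ + ψ < -(π / 2) :=
        lt_neg_pi_div_two_of_cos_neg (by linarith [hψ.2]) hcos
      exact Or.inr ⟨hθ.1, lt_sub_iff_add_lt.2 hupper⟩
    · exact Or.inl ⟨hright, hθ.2⟩
  · rintro ⟨hlt, hmem⟩
    have hnotMem : θ ∉ Icc (-(π / 2)) (π / 2) := by
      rintro ⟨hlower, hupper⟩
      obtain hright | hleft := hmem
      · exact hupper.not_gt hright.1
      · linarith [hleft.2, hψ.1]
    exact ⟨(formula hnotMem).symm ▸ hlt, hnotMem⟩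

end Trigonometry

lemma ae_mem_diff_of_map_absolutelyContinuous_restrict {α β : Type*} [MeasurableSpace α]
    [MeasurableSpace β] {μ : Measure α} {ν : Measure β} {f : α → β} {s t : Set β}
    (hf : AEMeasurable f μ) (hs : MeasurableSet s) (ht : ν t = 0)
    (hμν : μ.map f ≪ ν.restrict s) : ∀ᵐ a ∂μ, f a ∈ s \ t := by
  have hν : ∀ᵐ b ∂ν.restrict s, b ∈ s \ t :=
    (ae_restrict_mem hs).and (ae_restrict_of_ae (measure_eq_zero_iff_ae_notMem.1 ht))
  exact ae_of_ae_map hf (hμν.ae_le hν)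

theorem polar_decomposition_skew_tail_general
    {Ω : Type*} [MeasurableSpace Ω] (μ : Measure Ω)
    (R Θ : Ω → ℝ) (hΘm : AEMeasurable Θ μ)
    (hR : ∀ᵐ ω ∂μ, 0 ≤ R ω)
    (hΘ : ∀ᵐ ω ∂μ, Θ ω ∈ Ioo (-π) π \ {π / 2})
    (X Y : Ω → ℝ)
    (hX : X = fun ω => R ω * Real.cos (Θ ω))
    (hY : Y = fun ω => R ω * Real.sin (Θ ω))
    (ρ : ℝ) (hρ : ρ ∈ Icc (-1 : ℝ) 1)
    (x : ℝ) (hx : 0 ≤ x) :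
    μ {ω | x < ρ * |X ω| + Real.sqrt (1 - ρ ^ 2) * Y ω} =
      μ {ω | x < R ω * Real.cos (Θ ω - Real.arccos ρ) ∧
        Θ ω - Real.arccos ρ ∈ Ioo (-(π / 2)) (π / 2 - Real.arccos ρ)} +
      μ {ω | x < -(R ω * Real.cos (Θ ω + Real.arccos ρ)) ∧
        Θ ω ∈ Ioo (π / 2) π ∪ Ioo (-π) (-(π / 2) - Real.arccos ρ)} := by
  have hψ : arccos ρ ∈ Icc 0 π := ⟨arccos_nonneg ρ, arccos_le_pi ρ⟩
  rw [← sin_arccos]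
  nth_rw 1 [← cos_arccos hρ.1 hρ.2]
  subst hX hY
  rw [← measure_inter_add_sdiff₀ _
    (hΘm.nullMeasurableSet_preimage (measurableSet_Icc (a := -(π / 2)) (b := π / 2)))]
  congr 1 <;> refine measure_congr ?_ <;> filter_upwards [hR, hΘ] with ω hRω hΘω
  · exact propext (lt_cos_mul_abs_add_sin_mul_and_mem_Icc_iff hRω hx hψ hΘω.2)
  · exact propext (lt_cos_mul_abs_add_sin_mul_and_notMem_Icc_iff hRω hx hψ hΘω.1)

theorem polar_decomposition_skew_tail
    {Ω : Type*} [MeasurableSpace Ω] (μ : Measure Ω) [IsProbabilityMeasure μ]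
    (R Θ : Ω → ℝ) (hRm : Measurable R) (hΘm : Measurable Θ)
    (hRpos : ∀ᵐ ω ∂μ, 0 < R ω)
    (hΘunif : μ.map Θ = (ENNReal.ofReal (2 * π))⁻¹ • volume.restrict (Ioo (-π) π))
    (hindep : IndepFun R Θ μ)
    (X Y : Ω → ℝ)
    (hX : X = fun ω => R ω * Real.cos (Θ ω))
    (hY : Y = fun ω => R ω * Real.sin (Θ ω))
    (ρ : ℝ) (hρ : ρ ∈ Ioc (0 : ℝ) 1)
    (x : ℝ) (hx : 0 < x) :
    (μ {ω | x < ρ * |X ω| + Real.sqrt (1 - ρ ^ 2) * Y ω}).toReal =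
      (μ {ω | x < R ω * Real.cos (Θ ω - Real.arccos ρ) ∧
        Θ ω - Real.arccos ρ ∈ Ioo (-(π / 2)) (π / 2 - Real.arccos ρ)}).toReal +
      (μ {ω | x < -(R ω * Real.cos (Θ ω + Real.arccos ρ)) ∧
        Θ ω ∈ Ioo (π / 2) π ∪ Ioo (-π) (-(π / 2) - Real.arccos ρ)}).toReal := by
  have hΘ : ∀ᵐ ω ∂μ, Θ ω ∈ Ioo (-π) π \ {π / 2} :=
    ae_mem_diff_of_map_absolutelyContinuous_restrict hΘm.aemeasurable measurableSet_Ioo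
      (measure_singleton _) (hΘunif ▸ Measure.smul_absolutelyContinuous)
  rw [polar_decomposition_skew_tail_general μ R Θ hΘm.aemeasurable (hRpos.mono fun _ => le_of_lt)
      hΘ X Y hX hY ρ ⟨by linarith [hρ.1], hρ.2⟩ x hx.le,
    ENNReal.toReal_add (measure_ne_top _ _) (measure_ne_top _ _)]
end

section
/- For every λ > 0 and every y ∈ ℝ, ∫_0^∞ (1 - Φ((y + x)/(2λ) + λ))·e^{x} dx = e^{-y}·Φ(λ - y/(2λ)) - (1 - Φ(y/(2λ) + λ)), where Φ denotes the standard normal distribution function. -/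
open MeasureTheory Filter Real Set Topology

noncomputable def stdNormalCDF (t : ℝ) : ℝ :=
  (Real.sqrt (2 * Real.pi))⁻¹ * ∫ s in Set.Iic t, Real.exp (-(s ^ 2) / 2)

/-!
Let `Z` be normal with mean `m` and variance `σ²`, so that `P(Z > x) = Φ((m - x) / σ)`. By the layer
cake formula, `∫₀^∞ P(Z > x) eˣ dx = E[(e^Z - 1) 1_{Z > 0}] = E[e^Z 1_{Z > 0}] - P(Z > 0)`. Tilting
the law of `Z` by `e^Z` multiplies its mass by `E[e^Z] = e^(m + σ²/2)` and shifts its mean to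
`m + σ²`, so the first term is again a normal tail. The theorem is the case `σ = 2 * lam`,
`m = -y - 2 * lam ^ 2`, in which `m + σ²/2 = -y`.
-/

open ProbabilityTheory
open scoped NNReal

section LayerCake

variable {Ω : Type*} {mΩ : MeasurableSpace Ω} {μ : Measure Ω} [IsFiniteMeasure μ] {X : Ω → ℝ}

lemma integral_Ioi_measureReal_lt_mul {g : ℝ → ℝ} (hX : AEMeasurable X μ) (hX0 : 0 ≤ᵐ[μ] X)
    (hg : LocallyIntegrable g) (hg0 : 0 ≤ᵐ[volume.restrict (Ioi 0)] g) :
    ∫ x in Ioi 0, μ.real {ω | x < X ω} * g x = ∫ ω, (∫ x in 0..X ω, g x) ∂μ := by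
  have hg_int (a b : ℝ) : IntervalIntegrable g volume a b :=
    (hg.integrableOn_isCompact isCompact_uIcc).intervalIntegrable
  have tail_antitone : Antitone fun x ↦ μ.real {ω | x < X ω} := fun x₁ x₂ hx ↦
    measureReal_mono fun ω (hω : x₂ < X ω) ↦ hx.trans_lt hω
  have primitive_nonneg : 0 ≤ᵐ[μ] fun ω ↦ ∫ x in 0..X ω, g x := by
    filter_upwards [hX0] with ω (hω : 0 ≤ X ω)
    rw [Pi.zero_apply, intervalIntegral.integral_of_le hω]
    exact setIntegral_nonneg_of_ae_restrict
      (ae_restrict_of_ae_restrict_of_subset Ioc_subset_Ioi_self hg0)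
  have primitive_meas : AEStronglyMeasurable (fun ω ↦ ∫ x in 0..X ω, g x) μ :=
    ((intervalIntegral.continuous_primitive hg_int 0).measurable.comp_aemeasurable
      hX).aestronglyMeasurable
  rw [integral_eq_lintegral_of_nonneg_ae
      (hg0.mono fun x hx ↦ mul_nonneg measureReal_nonneg hx)
      (tail_antitone.measurable.aestronglyMeasurable.mul hg.aestronglyMeasurable.restrict),
    integral_eq_lintegral_of_nonneg_ae primitive_nonneg primitive_meas,
    lintegral_comp_eq_lintegral_meas_lt_mul μ hX0 hX (fun t _ ↦ hg_int 0 t) hg0]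
  simp only [ENNReal.ofReal_mul measureReal_nonneg, ofReal_measureReal (measure_ne_top μ _)]

lemma integral_Ioi_measureReal_lt_mul_exp (hX : AEMeasurable X μ)
    (hexp : IntegrableOn (fun ω ↦ exp (X ω)) {ω | 0 < X ω} μ) :
    ∫ x in Ioi 0, μ.real {ω | x < X ω} * exp x =
      ∫ ω in {ω | 0 < X ω}, exp (X ω) ∂μ - μ.real {ω | 0 < X ω} := by
  have null_meas : NullMeasurableSet {ω | 0 < X ω} μ :=
    nullMeasurableSet_lt aemeasurable_const hX
  have restrict_tail {x : ℝ} (hx : 0 < x) :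
      (μ.restrict {ω | 0 < X ω}).real {ω | x < X ω} = μ.real {ω | x < X ω} :=
    congrArg ENNReal.toReal (Measure.restrict_eq_self μ fun ω (hω : x < X ω) ↦ hx.trans hω)
  calc ∫ x in Ioi 0, μ.real {ω | x < X ω} * exp x
    _ = ∫ x in Ioi 0, (μ.restrict {ω | 0 < X ω}).real {ω | x < X ω} * exp x :=
      setIntegral_congr_fun measurableSet_Ioi fun x hx ↦ by simp only [restrict_tail hx]
    _ = ∫ ω in {ω | 0 < X ω}, (∫ x in 0..X ω, exp x) ∂μ :=
      integral_Ioi_measureReal_lt_mul hX.restrict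
        ((ae_restrict_mem₀ null_meas).mono fun ω hω ↦ le_of_lt hω)
        continuous_exp.locallyIntegrable (ae_of_all _ fun x ↦ (exp_pos x).le)
    _ = ∫ ω in {ω | 0 < X ω}, exp (X ω) ∂μ - μ.real {ω | 0 < X ω} := by
      simp only [integral_exp, exp_zero]
      rw [integral_sub hexp (integrable_const 1), setIntegral_const, smul_eq_mul, mul_one]

end LayerCake

section Tilting

lemma complexMGF_tilted_mul {Ω : Type*} {mΩ : MeasurableSpace Ω} (X : Ω → ℝ) (μ : Measure Ω)
    (t : ℝ) (z : ℂ) :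
    complexMGF X (μ.tilted (t * X ·)) z = complexMGF X μ (t + z) / mgf X μ t := by
  rw [complexMGF, integral_tilted_mul_eq_mgf, complexMGF, ← integral_div]
  refine integral_congr_ae (ae_of_all _ fun ω ↦ ?_)
  simp only [Complex.real_smul, Complex.ofReal_div, Complex.ofReal_exp, Complex.ofReal_mul,
    add_mul, Complex.exp_add]
  ring

variable (m : ℝ) (v : ℝ≥0) (t : ℝ)

lemma gaussianReal_tilted_mul :
    (gaussianReal m v).tilted (t * ·) = gaussianReal (m + v * t) v := by
  have := isProbabilityMeasure_tilted (integrable_exp_mul_gaussianReal (μ := m) (v := v) t)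
  refine Measure.ext_of_complexMGF_id_eq (funext fun z ↦ ?_)
  refine (complexMGF_tilted_mul id (gaussianReal m v) t z).trans ?_
  rw [mgf_id_gaussianReal, complexMGF_id_gaussianReal, complexMGF_id_gaussianReal,
    Complex.ofReal_exp, ← Complex.exp_sub]
  push_cast
  ring_nf

lemma setIntegral_exp_mul_gaussianReal (s : Set ℝ) :
    ∫ x in s, exp (t * x) ∂gaussianReal m v =
      exp (m * t + v * t ^ 2 / 2) * (gaussianReal (m + v * t) v).real s := by
  have hs := setIntegral_tilted_mul_eq_mgf (μ := gaussianReal m v) (X := id) (t := t)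
    (fun _ ↦ (1 : ℝ)) s
  simp only [id_eq, gaussianReal_tilted_mul, setIntegral_const, smul_eq_mul, mul_one,
    integral_div, mgf_id_gaussianReal] at hs
  rw [hs, mul_div_cancel₀ _ (exp_ne_zero _)]

end Tilting

lemma stdNormalCDF_eq_measureReal_Iic (t : ℝ) :
    stdNormalCDF t = (gaussianReal 0 1).real (Iic t) := by
  rw [measureReal_def, gaussianReal_apply_eq_integral 0 one_ne_zero,
    ENNReal.toReal_ofReal (integral_nonneg (gaussianPDFReal_nonneg 0 1)), stdNormalCDF]
  simp only [gaussianPDFReal, integral_const_mul, NNReal.coe_one, mul_one, sub_zero]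

lemma measureReal_Ioi_gaussianReal {σ : ℝ} (hσ : 0 < σ) (m a : ℝ) :
    (gaussianReal m (.mk (σ ^ 2) (sq_nonneg σ))).real (Ioi a) = stdNormalCDF ((m - a) / σ) := by
  have := nullSingletonClass_gaussianReal (μ := 0) one_ne_zero
  have law_reflect : (gaussianReal 0 1).map (fun z ↦ m - σ * z) =
      gaussianReal m (.mk (σ ^ 2) (sq_nonneg σ)) := by
    rw [show (fun z ↦ m - σ * z) = (m - ·) ∘ (σ * ·) from rfl,
      ← Measure.map_map (by fun_prop) (by fun_prop), gaussianReal_map_const_mul,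
      gaussianReal_map_const_sub, mul_zero, sub_zero, mul_one]
  have preimage_reflect : (fun z ↦ m - σ * z) ⁻¹' Ioi a = Iio ((m - a) / σ) := by
    ext z
    rw [mem_preimage, mem_Ioi, mem_Iio, lt_div_iff₀' hσ, lt_sub_comm]
  rw [← law_reflect, map_measureReal_apply (by fun_prop) measurableSet_Ioi, preimage_reflect,
    stdNormalCDF_eq_measureReal_Iic, measureReal_congr Iio_ae_eq_Iic]

lemma one_sub_stdNormalCDF (t : ℝ) : 1 - stdNormalCDF t = stdNormalCDF (-t) := by
  have tail := measureReal_Ioi_gaussianReal one_pos 0 t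
  rw [stdNormalCDF_eq_measureReal_Iic, ← probReal_compl_eq_one_sub measurableSet_Iic, compl_Iic]
  simpa using tail

lemma integral_Ioi_stdNormalCDF_mul_exp {σ : ℝ} (hσ : 0 < σ) (m : ℝ) :
    ∫ x in Ioi 0, stdNormalCDF ((m - x) / σ) * exp x =
      exp (m + σ ^ 2 / 2) * stdNormalCDF ((m + σ ^ 2) / σ) - stdNormalCDF (m / σ) := by
  set γ := gaussianReal m (.mk (σ ^ 2) (sq_nonneg σ)) with hγ
  have hexp : Integrable exp γ := by simpa using integrable_exp_mul_gaussianReal (μ := m) 1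
  have truncated_mgf : ∫ z in Ioi 0, exp z ∂γ =
      exp (m + σ ^ 2 / 2) * stdNormalCDF ((m + σ ^ 2) / σ) := by
    simpa [measureReal_Ioi_gaussianReal hσ] using
      setIntegral_exp_mul_gaussianReal m (.mk (σ ^ 2) (sq_nonneg σ)) 1 (Ioi 0)
  calc ∫ x in Ioi 0, stdNormalCDF ((m - x) / σ) * exp x
    _ = ∫ x in Ioi 0, γ.real (Ioi x) * exp x := by
      simp only [hγ, measureReal_Ioi_gaussianReal hσ]
    _ = ∫ z in Ioi 0, exp z ∂γ - γ.real (Ioi 0) :=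
      integral_Ioi_measureReal_lt_mul_exp aemeasurable_id hexp.integrableOn
    _ = exp (m + σ ^ 2 / 2) * stdNormalCDF ((m + σ ^ 2) / σ) - stdNormalCDF (m / σ) := by
      rw [truncated_mgf, hγ, measureReal_Ioi_gaussianReal hσ, sub_zero]

theorem integral_one_sub_Phi_exp_pos (lam y : ℝ) (hlam : 0 < lam) :
    ∫ x in Set.Ioi (0 : ℝ),
        (1 - stdNormalCDF ((y + x) / (2 * lam) + lam)) * Real.exp x =
      Real.exp (-y) * stdNormalCDF (lam - y / (2 * lam)) -
        (1 - stdNormalCDF (y / (2 * lam) + lam)) := by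
  set m := -y - 2 * lam ^ 2 with hm
  have tail_arg (x : ℝ) : -((y + x) / (2 * lam) + lam) = (m - x) / (2 * lam) := by
    rw [hm]; field_simp; ring
  have boundary_arg : -(y / (2 * lam) + lam) = m / (2 * lam) := by simpa using tail_arg 0
  have tilted_arg : lam - y / (2 * lam) = (m + (2 * lam) ^ 2) / (2 * lam) := by
    rw [hm]; field_simp; ring
  have exponent : -y = m + (2 * lam) ^ 2 / 2 := by rw [hm]; ring
  simp only [one_sub_stdNormalCDF, tail_arg]
  rw [integral_Ioi_stdNormalCDF_mul_exp (by positivity), boundary_arg, tilted_arg, ← exponent]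
end

section
/- For all x, y ∈ ℝ, lim_{n→∞} [P(|X| ≤ a_n·x + b_n + a_n·ln 2, ρ_n|X| + √(1-ρ_n²)·Y ≤ a_n·y + b_n + a_n·ln 2)]^n = H_λ(x, y), where H_λ(x,y) = exp(-Φ(λ + (x-y)/(2λ))·e^{-y} - Φ(λ + (y-x)/(2λ))·e^{-x}). -/
open MeasureTheory Filter Real Set ProbabilityTheory Topology

/-!
It suffices to show that `n` times the probability of exceeding one of the two levels tends to the
Hüsler–Reiss exponent. Put `β = b + a * log 2` and `Z = (|X| - β) / a`, and let
`σ = √(1 - ρ ^ 2)`. Dividing the second inequality by `σ`, the joint event reads `Z ≤ x` and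
`c + d * Z + Y ≤ 0` with `c → -(lam + y / (2 * lam))` and `d → 1 / (2 * lam)`, so conditionally on
`Z = t` an exceedance has probability `Φ (c + d * t)` for `t ≤ x` and `1` for `x < t`. By Mills'
ratio, `n` times the density of `Z` tends to `exp (-t)`; the shift `a * log 2` cancels the factor
`2` coming from the absolute value. Dominated convergence, with a Chernoff bound for `Φ` against the
growth of `exp (-t)` as `t → -∞`, gives the limit `∫ t, exp (-t) * (conditional probability)`, which
is computed in closed form by integration by parts and completing the square.
-/

open Asymptotics
open scoped NNReal

local notation "φ" => gaussianPDFReal 0 1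
local notation "Φ" => stdNormalCDF

section StdNormalPDF

lemma gaussianPDFReal_zero_one (z : ℝ) : φ z = (√(2 * π))⁻¹ * exp (-z ^ 2 / 2) := by
  simp [gaussianPDFReal]

lemma continuous_gaussianPDFReal (m : ℝ) (v : ℝ≥0) : Continuous (gaussianPDFReal m v) := by
  rw [gaussianPDFReal_def]
  fun_prop

lemma gaussianPDFReal_zero_one_add (z h : ℝ) :
    φ (z + h) = φ z * exp (-(z * h) - h ^ 2 / 2) := by
  rw [gaussianPDFReal_zero_one, gaussianPDFReal_zero_one, mul_assoc, ← exp_add]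
  congr 2
  ring

lemma log_gaussianPDFReal_zero_one (z : ℝ) : log (φ z) = -log √(2 * π) - z ^ 2 / 2 := by
  rw [gaussianPDFReal_zero_one, log_mul (by positivity) (exp_pos _).ne', log_inv, log_exp]
  ring

lemma hasDerivAt_gaussianPDFReal_zero_one (z : ℝ) : HasDerivAt φ (-z * φ z) z := by
  have hexponent : HasDerivAt (fun s : ℝ ↦ -s ^ 2 / 2) (-z) z :=
    ((hasDerivAt_pow 2 z).fun_neg.div_const 2).congr_deriv (by simp; ring)
  rw [funext gaussianPDFReal_zero_one]
  exact (hexponent.exp.const_mul _).congr_deriv (by ring)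

lemma tendsto_gaussianPDFReal_zero_one_atTop : Tendsto φ atTop (𝓝 0) := by
  have hexponent : Tendsto (fun s : ℝ ↦ -s ^ 2 / 2) atTop atBot := by
    simp only [neg_div]
    exact tendsto_neg_atTop_atBot.comp ((tendsto_pow_atTop two_ne_zero).atTop_div_const two_pos)
  rw [funext gaussianPDFReal_zero_one]
  simpa using (tendsto_exp_atBot.comp hexponent).const_mul (√(2 * π))⁻¹

end StdNormalPDF

section StdNormalCDF

lemma stdNormalCDF_eq_integral (z : ℝ) : Φ z = ∫ s in Iic z, φ s := by
  simp only [gaussianPDFReal_zero_one, integral_const_mul, stdNormalCDF]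

lemma measureReal_Iic_eq_stdNormalCDF (z : ℝ) : (gaussianReal 0 1).real (Iic z) = Φ z := by
  rw [stdNormalCDF_eq_integral, measureReal_def, gaussianReal_apply_eq_integral _ one_ne_zero,
    ENNReal.toReal_ofReal (integral_nonneg fun s ↦ gaussianPDFReal_nonneg 0 1 s)]

lemma stdNormalCDF_eq_cdf : Φ = cdf (gaussianReal 0 1) := by
  ext z
  rw [cdf_eq_real, measureReal_Iic_eq_stdNormalCDF]

lemma stdNormalCDF_nonneg (z : ℝ) : 0 ≤ Φ z := stdNormalCDF_eq_cdf ▸ cdf_nonneg _ z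

lemma stdNormalCDF_le_one (z : ℝ) : Φ z ≤ 1 := stdNormalCDF_eq_cdf ▸ cdf_le_one _ z

lemma tendsto_stdNormalCDF_atBot : Tendsto Φ atBot (𝓝 0) :=
  stdNormalCDF_eq_cdf ▸ tendsto_cdf_atBot _

lemma stdNormalCDF_neg (z : ℝ) : Φ (-z) = 1 - Φ z := by
  have : NullSingletonClass (gaussianReal 0 1) := nullSingletonClass_gaussianReal one_ne_zero
  have hmap : (gaussianReal 0 1).map (fun s ↦ -s) = gaussianReal 0 1 := by
    simp [gaussianReal_map_neg]
  calc Φ (-z) = ((gaussianReal 0 1).map (fun s ↦ -s)).real (Iic (-z)) := by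
        rw [hmap, measureReal_Iic_eq_stdNormalCDF]
    _ = (gaussianReal 0 1).real (Ici z) := by
        rw [map_measureReal_apply measurable_neg measurableSet_Iic]
        simp
    _ = (gaussianReal 0 1).real (Iic z)ᶜ := by
        rw [compl_Iic]
        exact measureReal_congr Ioi_ae_eq_Ici.symm
    _ = 1 - Φ z := by
        rw [probReal_compl_eq_one_sub measurableSet_Iic, measureReal_Iic_eq_stdNormalCDF]

lemma hasDerivAt_stdNormalCDF (z : ℝ) : HasDerivAt Φ (φ z) z := by
  have hΦ : Φ = fun z ↦ Φ 0 + ∫ s in (0 : ℝ)..z, φ s := by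
    ext z
    have hφ := integrable_gaussianPDFReal 0 1
    rw [← intervalIntegral.integral_Iic_sub_Iic hφ.integrableOn hφ.integrableOn,
      stdNormalCDF_eq_integral, stdNormalCDF_eq_integral]
    ring
  rw [hΦ]
  have hcont := continuous_gaussianPDFReal 0 1
  exact (intervalIntegral.integral_hasDerivAt_right (hcont.intervalIntegrable _ _)
    (hcont.stronglyMeasurableAtFilter _ _) hcont.continuousAt).const_add _

lemma continuous_stdNormalCDF : Continuous Φ :=
  continuous_iff_continuousAt.2 fun z ↦ (hasDerivAt_stdNormalCDF z).continuousAt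

lemma strictMono_stdNormalCDF : StrictMono Φ :=
  strictMono_of_hasDerivAt_pos hasDerivAt_stdNormalCDF
    fun z ↦ gaussianPDFReal_pos 0 1 z one_ne_zero

lemma stdNormalCDF_pos (z : ℝ) : 0 < Φ z :=
  (stdNormalCDF_nonneg (z - 1)).trans_lt (strictMono_stdNormalCDF (sub_one_lt z))

lemma tendsto_atTop_of_tendsto_stdNormalCDF_neg {ι : Type*} {l : Filter ι} {u : ι → ℝ}
    (hu : Tendsto (fun i ↦ Φ (-u i)) l (𝓝 0)) : Tendsto u l atTop := by
  refine tendsto_atTop.2 fun M ↦ ?_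
  filter_upwards [hu.eventually_lt_const (stdNormalCDF_pos (-M))] with i hi
  exact (neg_lt_neg_iff.1 (strictMono_stdNormalCDF.lt_iff_lt.1 hi)).le

lemma stdNormalCDF_le_exp {k : ℝ} (hk : 0 ≤ k) (z : ℝ) : Φ z ≤ exp (k ^ 2 / 2 + k * z) := by
  have hchernoff := measure_le_le_exp_mul_mgf (μ := gaussianReal 0 1) (X := id) z
    (neg_nonpos.2 hk) (integrable_exp_mul_gaussianReal (-k))
  rw [mgf_id_gaussianReal, ← exp_add] at hchernoff
  rw [← measureReal_Iic_eq_stdNormalCDF]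
  refine hchernoff.trans_eq (congrArg exp ?_)
  simp
  ring

lemma stdNormalCDF_neg_isEquivalent :
    (fun z ↦ Φ (-z)) ~[atTop] fun z ↦ φ z / z := by
  have hpos : ∀ z, 0 < φ z := fun z ↦ gaussianPDFReal_pos 0 1 z one_ne_zero
  rw [isEquivalent_iff_tendsto_one <|
    (eventually_gt_atTop 0).mono fun z hz ↦ (div_pos (hpos z) hz).ne']
  have hnum (z : ℝ) : HasDerivAt (fun z ↦ Φ (-z)) (-φ z) z := by
    simp only [stdNormalCDF_neg]
    exact (hasDerivAt_stdNormalCDF z).const_sub 1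
  have hden : ∀ᶠ z : ℝ in atTop,
      HasDerivAt (fun z ↦ φ z / z) (-(φ z * (1 + 1 / z ^ 2))) z := by
    filter_upwards [eventually_ne_atTop 0] with z hz
    refine ((hasDerivAt_gaussianPDFReal_zero_one z).div (hasDerivAt_id z) hz).congr_deriv ?_
    simp only [id_eq]
    field_simp
    ring
  have hderiv : Tendsto (fun z : ℝ ↦ -φ z / -(φ z * (1 + 1 / z ^ 2))) atTop (𝓝 1) := by
    have hinv : Tendsto (fun z : ℝ ↦ 1 / z ^ 2) atTop (𝓝 0) :=
      tendsto_const_nhds.div_atTop (tendsto_pow_atTop two_ne_zero)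
    have hlim : Tendsto (fun z : ℝ ↦ (1 + 1 / z ^ 2)⁻¹) atTop (𝓝 1) := by
      simpa using (hinv.const_add 1).inv₀ (by norm_num)
    refine hlim.congr fun z ↦ ?_
    have := (hpos z).ne'
    rw [neg_div_neg_eq, div_mul_cancel_left₀ this]
  refine HasDerivAt.lhopital_zero_atTop (Eventually.of_forall hnum) hden
    (Eventually.of_forall fun z ↦ ?_) ?_ ?_ hderiv
  · have := hpos z
    exact (neg_neg_of_pos (by positivity)).ne
  · exact tendsto_stdNormalCDF_atBot.comp tendsto_neg_atTop_atBot
  · exact tendsto_gaussianPDFReal_zero_one_atTop.div_atTop tendsto_id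

lemma neg_log_stdNormalCDF_neg_isEquivalent :
    (fun z ↦ -log (Φ (-z))) ~[atTop] fun z ↦ z ^ 2 / 2 := by
  have hφ : ∀ z, 0 < φ z := fun z ↦ gaussianPDFReal_pos 0 1 z one_ne_zero
  have hratio : Tendsto (fun z ↦ log (Φ (-z) / (φ z / z))) atTop (𝓝 0) := by
    have hden : ∀ᶠ z in atTop, φ z / z ≠ 0 :=
      (eventually_gt_atTop 0).mono fun z hz ↦ (div_pos (hφ z) hz).ne'
    simpa using ((isEquivalent_iff_tendsto_one hden).1 stdNormalCDF_neg_isEquivalent).log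
      one_ne_zero
  have hremainder : (fun z ↦ log √(2 * π) - log (Φ (-z) / (φ z / z)) + log z)
      =o[atTop] fun z ↦ z ^ 2 := by
    have hsq : Tendsto (fun z : ℝ ↦ z ^ 2) atTop atTop := tendsto_pow_atTop two_ne_zero
    refine IsLittleO.add ?_ ?_
    · exact ((hratio.const_sub _).isBigO_one ℝ).trans_isLittleO
        ((isLittleO_one_left_iff ℝ).2 (tendsto_norm_atTop_atTop.comp hsq))
    · have hid : (id : ℝ → ℝ) =o[atTop] fun z ↦ z ^ 2 := by
        simpa [Function.id_def] using isLittleO_pow_pow_atTop_of_lt (𝕜 := ℝ) one_lt_two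
      exact isLittleO_log_id_atTop.trans hid
  refine (hremainder.const_mul_right (c := (1 / 2 : ℝ)) (by norm_num)).congr' ?_ ?_
  · filter_upwards [eventually_gt_atTop 0] with z hz
    rw [log_div (stdNormalCDF_pos _).ne' (div_pos (hφ z) hz).ne', log_div (hφ z).ne' hz.ne',
      log_gaussianPDFReal_zero_one, Pi.sub_apply]
    ring
  · exact Eventually.of_forall fun z ↦ by ring

lemma stdNormalCDF_affine_le_exp {d k : ℝ} (hd : 0 < d) (hk : 0 ≤ k) (c t : ℝ) :
    Φ (c + d * t) ≤ exp ((k / d) ^ 2 / 2 + k / d * c) * exp (k * t) := by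
  refine (stdNormalCDF_le_exp (div_nonneg hk hd.le) _).trans_eq ?_
  rw [← exp_add]
  congr 1
  field_simp
  ring

end StdNormalCDF

section ExponentialMixture

variable {d : ℝ}

lemma exp_neg_mul_stdNormalCDF_affine_le (hd : 0 < d) (c t : ℝ) :
    exp (-t) * Φ (c + d * t) ≤ exp ((2 / d) ^ 2 / 2 + 2 / d * c) * exp t := by
  calc exp (-t) * Φ (c + d * t)
      ≤ exp (-t) * (exp ((2 / d) ^ 2 / 2 + 2 / d * c) * exp (2 * t)) := by
        gcongr
        exact stdNormalCDF_affine_le_exp hd zero_le_two c t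
    _ = exp ((2 / d) ^ 2 / 2 + 2 / d * c) * exp t := by
        rw [mul_left_comm, ← exp_add]
        ring_nf

lemma integrableOn_Iic_exp_neg_mul_stdNormalCDF (hd : 0 < d) (c x : ℝ) :
    IntegrableOn (fun t ↦ exp (-t) * Φ (c + d * t)) (Iic x) := by
  have hΦ := continuous_stdNormalCDF
  refine ((integrableOn_exp_Iic x).const_mul (exp ((2 / d) ^ 2 / 2 + 2 / d * c))).mono'
    (Continuous.aestronglyMeasurable (by fun_prop)) (Eventually.of_forall fun t ↦ ?_)
  rw [norm_of_nonneg (mul_nonneg (exp_pos _).le (stdNormalCDF_nonneg _))]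
  exact exp_neg_mul_stdNormalCDF_affine_le hd c t

lemma tendsto_exp_neg_mul_stdNormalCDF_atBot (hd : 0 < d) (c : ℝ) :
    Tendsto (fun t ↦ exp (-t) * Φ (c + d * t)) atBot (𝓝 0) :=
  squeeze_zero (fun t ↦ mul_nonneg (exp_pos _).le (stdNormalCDF_nonneg _))
    (exp_neg_mul_stdNormalCDF_affine_le hd c) (by simpa using tendsto_exp_atBot.const_mul _)

lemma hasDerivAt_exp_neg_mul_stdNormalCDF_primitive (hd : d ≠ 0) (c t : ℝ) :
    HasDerivAt (fun t ↦ exp (1 / (2 * d ^ 2) + c / d) * Φ (c + 1 / d + d * t)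
      - exp (-t) * Φ (c + d * t)) (exp (-t) * Φ (c + d * t)) t := by
  have haffine (c : ℝ) : HasDerivAt (fun t ↦ Φ (c + d * t)) (φ (c + d * t) * d) t :=
    (hasDerivAt_stdNormalCDF _).comp t (((hasDerivAt_id t).const_mul d).const_add c |>.congr_deriv
      (mul_one d))
  have hexp : HasDerivAt (fun t : ℝ ↦ exp (-t)) (-exp (-t)) t :=
    (hasDerivAt_id t).fun_neg.exp.congr_deriv (by simp)
  have hsquare : exp (1 / (2 * d ^ 2) + c / d) * φ (c + 1 / d + d * t)
      = exp (-t) * φ (c + d * t) := by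
    rw [show c + 1 / d + d * t = c + d * t + 1 / d by ring, gaussianPDFReal_zero_one_add,
      mul_left_comm, ← exp_add, mul_comm]
    congr 2
    field_simp
    ring
  refine (((haffine (c + 1 / d)).const_mul _).sub (hexp.mul (haffine c))).congr_deriv ?_
  linear_combination d * hsquare

lemma integral_Iic_exp_neg_mul_stdNormalCDF (hd : 0 < d) (c x : ℝ) :
    ∫ t in Iic x, exp (-t) * Φ (c + d * t)
      = exp (1 / (2 * d ^ 2) + c / d) * Φ (c + 1 / d + d * x) - exp (-x) * Φ (c + d * x) := by
  have hbot : Tendsto (fun t ↦ exp (1 / (2 * d ^ 2) + c / d) * Φ (c + 1 / d + d * t)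
      - exp (-t) * Φ (c + d * t)) atBot (𝓝 0) := by
    have hΦ : Tendsto (fun t ↦ Φ (c + 1 / d + d * t)) atBot (𝓝 0) :=
      tendsto_stdNormalCDF_atBot.comp
        (tendsto_atBot_add_const_left _ _ (tendsto_id.const_mul_atBot hd))
    simpa using (hΦ.const_mul _).sub (tendsto_exp_neg_mul_stdNormalCDF_atBot hd c)
  rw [integral_Iic_of_hasDerivAt_of_tendsto'
    (fun t _ ↦ hasDerivAt_exp_neg_mul_stdNormalCDF_primitive hd.ne' c t)
    (integrableOn_Iic_exp_neg_mul_stdNormalCDF hd c x) hbot, sub_zero]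

end ExponentialMixture

section CondExceedance

/-- The conditional probability, given `Z = t`, that the pair `(Z, c + d * Z + Y)`, with `Y`
standard normal and independent of `Z`, leaves the quadrant `Iic x ×ˢ Iic 0`. -/
noncomputable def condExceedance (x c d t : ℝ) : ℝ :=
  if t ≤ x then Φ (c + d * t) else 1

variable {x c d t : ℝ}

lemma measurable_condExceedance (x c d : ℝ) : Measurable (condExceedance x c d) := by
  have := continuous_stdNormalCDF.measurable
  exact Measurable.ite measurableSet_Iic (by fun_prop) measurable_const

lemma condExceedance_nonneg : 0 ≤ condExceedance x c d t := by
  rw [condExceedance]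
  split_ifs
  exacts [stdNormalCDF_nonneg _, zero_le_one]

lemma condExceedance_le_one : condExceedance x c d t ≤ 1 := by
  rw [condExceedance]
  split_ifs
  exacts [stdNormalCDF_le_one _, le_rfl]

lemma condExceedance_le_exp (hd : 0 < d) {k : ℝ} (hk : 0 ≤ k) :
    condExceedance x c d t
      ≤ (exp ((k / d) ^ 2 / 2 + k / d * c) + exp (-(k * x))) * exp (k * t) := by
  rw [condExceedance, add_mul]
  split_ifs with ht
  · exact (stdNormalCDF_affine_le_exp hd hk c t).trans (le_add_of_nonneg_right (by positivity))
  · have : 1 ≤ exp (-(k * x)) * exp (k * t) := by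
      rw [← exp_add, one_le_exp_iff]
      nlinarith
    exact this.trans (le_add_of_nonneg_left (by positivity))

lemma tendsto_condExceedance {ι : Type*} {l : Filter ι} {u v : ι → ℝ} (hu : Tendsto u l (𝓝 c))
    (hv : Tendsto v l (𝓝 d)) :
    Tendsto (fun i ↦ condExceedance x (u i) (v i) t) l (𝓝 (condExceedance x c d t)) := by
  unfold condExceedance
  split_ifs
  · exact (continuous_stdNormalCDF.tendsto _).comp (hu.add (hv.mul_const t))
  · exact tendsto_const_nhds

lemma integral_exp_neg_mul_condExceedance (hd : 0 < d) :
    ∫ t, exp (-t) * condExceedance x c d t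
      = exp (1 / (2 * d ^ 2) + c / d) * Φ (c + 1 / d + d * x) + exp (-x) * Φ (-(c + d * x)) := by
  have hIic : EqOn (fun t ↦ exp (-t) * Φ (c + d * t)) (fun t ↦ exp (-t) * condExceedance x c d t)
      (Iic x) := fun t ht ↦ by simp only [condExceedance, if_pos (mem_Iic.1 ht)]
  have hIoi : EqOn (fun t ↦ exp (-t)) (fun t ↦ exp (-t) * condExceedance x c d t) (Ioi x) :=
    fun t ht ↦ by simp only [condExceedance, if_neg (mem_Ioi.1 ht).not_ge, mul_one]
  rw [← intervalIntegral.integral_Iic_add_Ioi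
      ((integrableOn_Iic_exp_neg_mul_stdNormalCDF hd c x).congr_fun hIic measurableSet_Iic)
      ((integrableOn_exp_neg_Ioi x).congr_fun hIoi measurableSet_Ioi),
    ← setIntegral_congr_fun measurableSet_Iic hIic, ← setIntegral_congr_fun measurableSet_Ioi hIoi,
    integral_Iic_exp_neg_mul_stdNormalCDF hd, integral_exp_neg_Ioi, stdNormalCDF_neg]
  ring

end CondExceedance

section HalfNormal

/-- The density of `(|X| - β) / a` for a standard normal `X` and `0 < a`. -/
noncomputable def halfNormalDensity (a β t : ℝ) : ℝ :=
  if 0 < β + a * t then 2 * a * φ (β + a * t) else 0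

lemma measurable_halfNormalDensity (a β : ℝ) : Measurable (halfNormalDensity a β) := by
  have := (continuous_gaussianPDFReal 0 1).measurable
  exact Measurable.ite (measurableSet_lt measurable_const (by fun_prop)) (by fun_prop)
    measurable_const

lemma integral_gaussianReal_comp_abs_sub_div {a : ℝ} (ha : 0 < a) (β : ℝ) (g : ℝ → ℝ) :
    ∫ z, g ((|z| - β) / a) ∂gaussianReal 0 1 = ∫ t, halfNormalDensity a β t * g t := by
  set h : ℝ → ℝ := (Ioi 0).indicator fun s ↦ φ s * g ((s - β) / a) with hh
  have hrescale (t : ℝ) : halfNormalDensity a β t * g t = 2 * a * h (β + a * t) := by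
    simp only [halfNormalDensity, hh, indicator, mem_Ioi, add_sub_cancel_left,
      mul_div_cancel_left₀ t ha.ne']
    split_ifs <;> ring
  calc ∫ z, g ((|z| - β) / a) ∂gaussianReal 0 1
      = ∫ z, φ |z| * g ((|z| - β) / a) := by
        rw [integral_gaussianReal_eq_integral_smul one_ne_zero]
        simp only [gaussianPDFReal_zero_one, sq_abs, smul_eq_mul]
    _ = 2 * ∫ s, h (β + s) := by
        rw [integral_comp_abs (f := fun s ↦ φ s * g ((s - β) / a)),
          ← integral_indicator measurableSet_Ioi, integral_add_left_eq_self h β]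
    _ = 2 * (a * ∫ t, h (β + a * t)) := by
        rw [Measure.integral_comp_mul_left (fun s ↦ h (β + s)) a, abs_of_pos (inv_pos.2 ha),
          smul_eq_mul, mul_inv_cancel_left₀ ha.ne']
    _ = ∫ t, halfNormalDensity a β t * g t := by
        simp only [hrescale, integral_const_mul, mul_assoc]

/-- The scales `a` and locations `β` normalize the maximum of `N` independent copies of `|X|`, `X`
standard normal, towards the Gumbel law: the third limit says that `N` times the density of
`(|X| - β) / a` at the origin tends to `1`. -/
structure IsHalfNormalNorming {ι : Type*} (l : Filter ι) (N a β : ι → ℝ) : Prop where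
  tendsto_scale : Tendsto a l (𝓝[>] 0)
  tendsto_scale_mul_loc : Tendsto (fun i ↦ a i * β i) l (𝓝 1)
  tendsto_mul_density : Tendsto (fun i ↦ N i * (2 * a i * φ (β i))) l (𝓝 1)

variable {ι : Type*} {l : Filter ι} {N a β : ι → ℝ}

lemma tendsto_gaussianPDFReal_add_mul_div (ha : Tendsto a l (𝓝 0))
    (haβ : Tendsto (fun i ↦ a i * β i) l (𝓝 1)) (t : ℝ) :
    Tendsto (fun i ↦ φ (β i + a i * t) / φ (β i)) l (𝓝 (exp (-t))) := by
  have hexponent : Tendsto (fun i ↦ -(a i * β i * t) - (a i * t) ^ 2 / 2) l (𝓝 (-t)) := by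
    simpa using (haβ.mul_const t).neg.sub (((ha.mul_const t).pow 2).div_const 2)
  refine hexponent.rexp.congr fun i ↦ ?_
  rw [gaussianPDFReal_zero_one_add,
    mul_div_cancel_left₀ _ (gaussianPDFReal_pos 0 1 _ one_ne_zero).ne']
  ring_nf

namespace IsHalfNormalNorming

lemma tendsto_loc (h : IsHalfNormalNorming l N a β) : Tendsto β l atTop := by
  have hinv : Tendsto (fun i ↦ (a i)⁻¹) l atTop :=
    tendsto_inv_nhdsGT_zero.comp h.tendsto_scale
  refine (h.tendsto_scale_mul_loc.pos_mul_atTop one_pos hinv).congr' ?_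
  filter_upwards [h.tendsto_scale.eventually self_mem_nhdsWithin] with i hi
  exact mul_comm (a i) (β i) ▸ mul_inv_cancel_right₀ (ne_of_gt hi) _

lemma tendsto_mul_halfNormalDensity (h : IsHalfNormalNorming l N a β) (t : ℝ) :
    Tendsto (fun i ↦ N i * halfNormalDensity (a i) (β i) t) l (𝓝 (exp (-t))) := by
  have ha : Tendsto a l (𝓝 0) := h.tendsto_scale.mono_right nhdsWithin_le_nhds
  have hprod := h.tendsto_mul_density.mul
    (tendsto_gaussianPDFReal_add_mul_div ha h.tendsto_scale_mul_loc t)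
  rw [one_mul] at hprod
  refine hprod.congr' ?_
  filter_upwards [(h.tendsto_loc.atTop_add (ha.mul_const t)).eventually_gt_atTop 0] with i hi
  have := (gaussianPDFReal_pos 0 1 (β i) one_ne_zero).ne'
  rw [halfNormalDensity, if_pos hi]
  field_simp

lemma eventually_abs_mul_halfNormalDensity_le (h : IsHalfNormalNorming l N a β) :
    ∀ᶠ i in l, ∀ t, |N i * halfNormalDensity (a i) (β i) t|
      ≤ 2 * (exp (-(1 / 2) * t) + exp (-2 * t)) := by
  filter_upwards [h.tendsto_mul_density.abs.eventually_le_const (u := 2) (by norm_num),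
    h.tendsto_scale_mul_loc.eventually_const_le (u := 1 / 2) (by norm_num),
    h.tendsto_scale_mul_loc.eventually_le_const (u := 2) (by norm_num)] with i hN hlow hupp t
  rw [halfNormalDensity]
  split_ifs
  · have hexp : exp (-(β i * (a i * t)) - (a i * t) ^ 2 / 2)
        ≤ exp (-(1 / 2) * t) + exp (-2 * t) := by
      rcases le_total 0 t with ht | ht
      · refine (exp_le_exp.2 ?_).trans (le_add_of_nonneg_right (exp_pos _).le)
        nlinarith [sq_nonneg (a i * t)]
      · refine (exp_le_exp.2 ?_).trans (le_add_of_nonneg_left (exp_pos _).le)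
        nlinarith [sq_nonneg (a i * t)]
    rw [gaussianPDFReal_zero_one_add, ← mul_assoc (2 * a i), ← mul_assoc, abs_mul, abs_exp]
    gcongr
  · rw [mul_zero, abs_zero]
    positivity

lemma tendsto_mul_integral_comp [l.IsCountablyGenerated] (h : IsHalfNormalNorming l N a β)
    {g : ι → ℝ → ℝ} {g' G : ℝ → ℝ} (hg : ∀ i, Measurable (g i))
    (hlim : ∀ t, Tendsto (fun i ↦ g i t) l (𝓝 (g' t))) (hbound : ∀ᶠ i in l, ∀ t, |g i t| ≤ G t)
    (hG : Integrable fun t ↦ (exp (-(1 / 2) * t) + exp (-2 * t)) * G t) :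
    Tendsto (fun i ↦ N i * ∫ z, g i ((|z| - β i) / a i) ∂gaussianReal 0 1) l
      (𝓝 (∫ t, exp (-t) * g' t)) := by
  have hdensity : ∀ᶠ i in l, ∫ t, N i * halfNormalDensity (a i) (β i) t * g i t
      = N i * ∫ z, g i ((|z| - β i) / a i) ∂gaussianReal 0 1 := by
    filter_upwards [h.tendsto_scale.eventually self_mem_nhdsWithin] with i hi
    simp only [mul_assoc, integral_const_mul, integral_gaussianReal_comp_abs_sub_div hi]
  refine Tendsto.congr' hdensity <| tendsto_integral_filter_of_dominated_convergence
    (fun t ↦ 2 * ((exp (-(1 / 2) * t) + exp (-2 * t)) * G t)) (Eventually.of_forall fun i ↦ ?_) ?_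
    (hG.const_mul 2) (Eventually.of_forall fun t ↦ (h.tendsto_mul_halfNormalDensity t).mul (hlim t))
  · exact (((measurable_halfNormalDensity _ _).const_mul _).mul (hg i)).aestronglyMeasurable
  · filter_upwards [h.eventually_abs_mul_halfNormalDensity_le, hbound] with i hN hi
    refine Eventually.of_forall fun t ↦ ?_
    rw [norm_mul, norm_eq_abs, norm_eq_abs, ← mul_assoc]
    exact mul_le_mul (hN t) (hi t) (abs_nonneg _) (by positivity)

end IsHalfNormalNorming

lemma integrable_exp_add_exp_mul_min {C : ℝ} (hC : 0 ≤ C) :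
    Integrable fun t ↦ (exp (-(1 / 2) * t) + exp (-2 * t)) * min 1 (C * exp (3 * t)) := by
  have hmeas {s : Set ℝ} : AEStronglyMeasurable
      (fun t ↦ (exp (-(1 / 2) * t) + exp (-2 * t)) * min 1 (C * exp (3 * t)))
      (volume.restrict s) := Continuous.aestronglyMeasurable (by fun_prop)
  rw [← integrableOn_univ, ← Iic_union_Ioi (a := (0 : ℝ))]
  refine IntegrableOn.union ?_ ?_
  · refine (((integrableOn_exp_mul_Iic (a := 5 / 2) (by norm_num) 0).add
      (integrableOn_exp_mul_Iic one_pos 0)).const_mul C).mono' hmeas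
      (Eventually.of_forall fun t ↦ ?_)
    rw [norm_of_nonneg (by positivity)]
    calc (exp (-(1 / 2) * t) + exp (-2 * t)) * min 1 (C * exp (3 * t))
        ≤ (exp (-(1 / 2) * t) + exp (-2 * t)) * (C * exp (3 * t)) := by
          gcongr
          exact min_le_right _ _
      _ = C * (exp (5 / 2 * t) + exp (1 * t)) := by
          rw [mul_left_comm, add_mul, ← exp_add, ← exp_add]
          ring_nf
  · refine ((integrableOn_exp_mul_Ioi (a := -(1 / 2)) (by norm_num) 0).add
      (integrableOn_exp_mul_Ioi (a := -2) (by norm_num) 0)).mono' hmeas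
      (Eventually.of_forall fun t ↦ ?_)
    rw [norm_of_nonneg (by positivity)]
    exact mul_le_of_le_one_right (by positivity) (min_le_left _ _)

lemma IsHalfNormalNorming.tendsto_mul_integral_condExceedance [l.IsCountablyGenerated]
    (h : IsHalfNormalNorming l N a β) {u v : ι → ℝ} {c d : ℝ} (hu : Tendsto u l (𝓝 c))
    (hv : Tendsto v l (𝓝 d)) (hd : 0 < d) (x : ℝ) :
    Tendsto (fun i ↦ N i * ∫ z, condExceedance x (u i) (v i) ((|z| - β i) / a i) ∂gaussianReal 0 1)
      l (𝓝 (∫ t, exp (-t) * condExceedance x c d t)) := by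
  -- The rate `3` beats the factor `exp (-2 * t)` in the domination of the density as `t → -∞`.
  have hconst : Tendsto (fun i ↦ exp ((3 / v i) ^ 2 / 2 + 3 / v i * u i) + exp (-(3 * x))) l
      (𝓝 (exp ((3 / d) ^ 2 / 2 + 3 / d * c) + exp (-(3 * x)))) := by
    have hdiv : Tendsto (fun i ↦ 3 / v i) l (𝓝 (3 / d)) := tendsto_const_nhds.div hv hd.ne'
    exact (((hdiv.pow 2).div_const 2).add (hdiv.mul hu)).rexp.add_const _
  set C := exp ((3 / d) ^ 2 / 2 + 3 / d * c) + exp (-(3 * x)) + 1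
  have hC : 0 ≤ C := by positivity
  refine h.tendsto_mul_integral_comp (fun i ↦ measurable_condExceedance _ _ _)
    (fun t ↦ tendsto_condExceedance hu hv) ?_ (integrable_exp_add_exp_mul_min hC)
  filter_upwards [hconst.eventually_le_const (lt_add_one _), hv.eventually_const_lt hd]
    with i hi hvi t
  rw [abs_of_nonneg condExceedance_nonneg]
  refine le_min condExceedance_le_one ((condExceedance_le_exp hvi zero_le_three).trans ?_)
  gcongr

end HalfNormal

section BivariateProbability

variable {Ω : Type*} [MeasurableSpace Ω] {μ : Measure Ω} [IsProbabilityMeasure μ] {Y : Ω → ℝ}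

lemma measureReal_le_and_affine_le_zero_eq {Z : Ω → ℝ} (hZ : AEMeasurable Z μ)
    (hY : HasLaw Y (gaussianReal 0 1) μ) (hind : IndepFun Z Y μ) (x c d : ℝ) :
    μ.real {ω | Z ω ≤ x ∧ c + d * Z ω + Y ω ≤ 0} = 1 - ∫ ω, condExceedance x c d (Z ω) ∂μ := by
  have : IsProbabilityMeasure (μ.map Z) := Measure.isProbabilityMeasure_map hZ
  set S : Set (ℝ × ℝ) := {p | p.1 ≤ x ∧ c + d * p.1 + p.2 ≤ 0} with hS
  have hSmeas : MeasurableSet S :=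
    (measurableSet_le measurable_fst measurable_const).inter
      (measurableSet_le (f := fun p : ℝ × ℝ ↦ c + d * p.1 + p.2) (by fun_prop) measurable_const)
  have hsection (z : ℝ) :
      (gaussianReal 0 1).real (Prod.mk z ⁻¹' S) = 1 - condExceedance x c d z := by
    by_cases hz : z ≤ x
    · have : Prod.mk z ⁻¹' S = Iic (-(c + d * z)) := by
        ext y
        simp only [hS, mem_preimage, mem_ofPred_eq, hz, true_and, mem_Iic,
          le_neg_iff_add_nonpos_left]
      rw [this, measureReal_Iic_eq_stdNormalCDF, stdNormalCDF_neg, condExceedance, if_pos hz]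
    · simp [hS, condExceedance, hz]
  have hmeas := (measurable_condExceedance x c d).aestronglyMeasurable (μ := μ.map Z)
  have hint : Integrable (condExceedance x c d) (μ.map Z) :=
    Integrable.of_bound hmeas 1 (Eventually.of_forall fun z ↦ by
      simpa only [norm_of_nonneg condExceedance_nonneg] using condExceedance_le_one)
  calc μ.real {ω | Z ω ≤ x ∧ c + d * Z ω + Y ω ≤ 0}
      = ((μ.map Z).prod (gaussianReal 0 1)).real S :=
        (hind.hasLaw_prod ⟨hZ, rfl⟩ hY).measureReal_eq hSmeas
    _ = ∫ z, (gaussianReal 0 1).real (Prod.mk z ⁻¹' S) ∂μ.map Z := by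
        rw [measureReal_def, Measure.prod_apply hSmeas,
          ← integral_toReal (measurable_measure_prodMk_left hSmeas).aemeasurable
            (Eventually.of_forall fun z ↦ measure_lt_top _ _)]
        rfl
    _ = 1 - ∫ z, condExceedance x c d z ∂μ.map Z := by
        simp only [hsection]
        rw [integral_sub (integrable_const 1) hint, integral_const, probReal_univ, one_smul]
    _ = 1 - ∫ ω, condExceedance x c d (Z ω) ∂μ := by rw [integral_map hZ hmeas]

lemma measureReal_abs_le_and_le_eq {X : Ω → ℝ} (hX : HasLaw X (gaussianReal 0 1) μ)
    (hY : HasLaw Y (gaussianReal 0 1) μ) (hind : IndepFun X Y μ) {a σ : ℝ} (ha : 0 < a)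
    (hσ : 0 < σ) (r β x y : ℝ) :
    μ.real {ω | |X ω| ≤ β + a * x ∧ r * |X ω| + σ * Y ω ≤ β + a * y}
      = 1 - ∫ z, condExceedance x ((r * β - β - a * y) / σ) (r * a / σ) ((|z| - β) / a)
          ∂gaussianReal 0 1 := by
  have hnorm : Measurable fun z : ℝ ↦ (|z| - β) / a := by fun_prop
  have hevent : {ω | |X ω| ≤ β + a * x ∧ r * |X ω| + σ * Y ω ≤ β + a * y}
      = {ω | (|X ω| - β) / a ≤ x ∧
          (r * β - β - a * y) / σ + r * a / σ * ((|X ω| - β) / a) + Y ω ≤ 0} := by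
    ext ω
    have hstd : (r * β - β - a * y) / σ + r * a / σ * ((|X ω| - β) / a) + Y ω
        = (r * |X ω| + σ * Y ω - (β + a * y)) / σ := by
      field_simp
      ring
    simp only [mem_ofPred_eq, hstd, div_le_iff₀ ha, div_le_iff₀ hσ, zero_mul, sub_le_iff_le_add',
      mul_comm x, add_zero]
  rw [hevent]
  refine (measureReal_le_and_affine_le_zero_eq (hnorm.comp_aemeasurable hX.aemeasurable) hY
    (hind.comp hnorm measurable_id) _ _ _).trans ?_
  exact congrArg (1 - ·) <| hX.integral_comp
    ((measurable_condExceedance _ _ _).comp hnorm).aestronglyMeasurable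

end BivariateProbability

section HueslerReiss

/-- The exponent of the Hüsler–Reiss law with parameter `lam`: its distribution function is
`(x, y) ↦ exp (-hueslerReissExponent lam x y)`. -/
noncomputable def hueslerReissExponent (lam x y : ℝ) : ℝ :=
  Φ (lam + (x - y) / (2 * lam)) * exp (-y) + Φ (lam + (y - x) / (2 * lam)) * exp (-x)

variable {lam : ℝ}

lemma integral_exp_neg_mul_condExceedance_eq_hueslerReissExponent (hlam : 0 < lam) (x y : ℝ) :
    ∫ t, exp (-t) * condExceedance x (-(lam + y / (2 * lam))) (1 / (2 * lam)) t
      = hueslerReissExponent lam x y := by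
  have hexp : 1 / (2 * (1 / (2 * lam)) ^ 2) + -(lam + y / (2 * lam)) / (1 / (2 * lam)) = -y := by
    field_simp
    ring
  have hleft : -(lam + y / (2 * lam)) + 1 / (1 / (2 * lam)) + 1 / (2 * lam) * x
      = lam + (x - y) / (2 * lam) := by
    field_simp
    ring
  have hright : -(-(lam + y / (2 * lam)) + 1 / (2 * lam) * x) = lam + (y - x) / (2 * lam) := by
    ring
  rw [integral_exp_neg_mul_condExceedance (by positivity), hexp, hleft, hright,
    hueslerReissExponent]
  ring

variable {ι : Type*} {l : Filter ι} {N a β ρ : ι → ℝ}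

lemma tendsto_one_of_tendsto_one_sub_div_sq {k : ℝ} (ha : Tendsto a l (𝓝[>] 0))
    (hρ : Tendsto (fun i ↦ (1 - ρ i) / a i ^ 2) l (𝓝 k)) : Tendsto ρ l (𝓝 1) := by
  have ha' : Tendsto a l (𝓝 0) := ha.mono_right nhdsWithin_le_nhds
  have hlim : Tendsto (fun i ↦ 1 - (1 - ρ i) / a i ^ 2 * a i ^ 2) l (𝓝 1) := by
    simpa using (hρ.mul (ha'.pow 2)).const_sub 1
  refine hlim.congr' ?_
  filter_upwards [ha.eventually self_mem_nhdsWithin] with i hi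
  rw [div_mul_cancel₀ _ (pow_ne_zero 2 (ne_of_gt hi)), sub_sub_cancel]

lemma tendsto_div_sqrt_one_sub_sq (hlam : 0 < lam) (ha : Tendsto a l (𝓝[>] 0))
    (hρ : Tendsto (fun i ↦ (1 - ρ i) / a i ^ 2) l (𝓝 (2 * lam ^ 2))) :
    Tendsto (fun i ↦ a i / √(1 - ρ i ^ 2)) l (𝓝 (1 / (2 * lam))) := by
  have hprod : Tendsto (fun i ↦ (1 - ρ i) / a i ^ 2 * (1 + ρ i)) l (𝓝 ((2 * lam) ^ 2)) := by
    convert hρ.mul ((tendsto_one_of_tendsto_one_sub_div_sq ha hρ).const_add 1) using 2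
    ring
  have hsqrt := hprod.sqrt.inv₀ (by positivity)
  rw [sqrt_sq (by positivity), inv_eq_one_div] at hsqrt
  refine hsqrt.congr' ?_
  filter_upwards [ha.eventually self_mem_nhdsWithin] with i hi
  rw [show (1 - ρ i) / a i ^ 2 * (1 + ρ i) = (1 - ρ i ^ 2) / a i ^ 2 by ring,
    sqrt_div' _ (sq_nonneg _), sqrt_sq (le_of_lt hi), inv_div]

lemma tendsto_mul_div_sqrt_one_sub_sq (hlam : 0 < lam) (ha : Tendsto a l (𝓝[>] 0))
    (hρ : Tendsto (fun i ↦ (1 - ρ i) / a i ^ 2) l (𝓝 (2 * lam ^ 2))) :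
    Tendsto (fun i ↦ ρ i * a i / √(1 - ρ i ^ 2)) l (𝓝 (1 / (2 * lam))) := by
  simpa only [mul_div_assoc, one_mul] using
    (tendsto_one_of_tendsto_one_sub_div_sq ha hρ).mul (tendsto_div_sqrt_one_sub_sq hlam ha hρ)

lemma tendsto_mul_sub_sub_div_sqrt_one_sub_sq (hlam : 0 < lam) (ha : Tendsto a l (𝓝[>] 0))
    (haβ : Tendsto (fun i ↦ a i * β i) l (𝓝 1))
    (hρ : Tendsto (fun i ↦ (1 - ρ i) / a i ^ 2) l (𝓝 (2 * lam ^ 2))) (y : ℝ) :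
    Tendsto (fun i ↦ (ρ i * β i - β i - a i * y) / √(1 - ρ i ^ 2)) l
      (𝓝 (-(lam + y / (2 * lam)))) := by
  have hprod := (((hρ.mul haβ).add_const y).mul (tendsto_div_sqrt_one_sub_sq hlam ha hρ)).neg
  rw [show -((2 * lam ^ 2 * 1 + y) * (1 / (2 * lam))) = -(lam + y / (2 * lam)) by field_simp]
    at hprod
  refine hprod.congr' ?_
  filter_upwards [ha.eventually self_mem_nhdsWithin] with i hi
  have : a i ≠ 0 := ne_of_gt hi
  field_simp
  ring

variable {Ω : Type*} [MeasurableSpace Ω] {μ : Measure Ω} [IsProbabilityMeasure μ] {X Y : Ω → ℝ}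

theorem IsHalfNormalNorming.tendsto_mul_one_sub_measureReal [l.IsCountablyGenerated]
    (h : IsHalfNormalNorming l N a β) (hX : HasLaw X (gaussianReal 0 1) μ)
    (hY : HasLaw Y (gaussianReal 0 1) μ) (hind : IndepFun X Y μ) (hlam : 0 < lam)
    (hρ : Tendsto (fun i ↦ (1 - ρ i) / a i ^ 2) l (𝓝 (2 * lam ^ 2))) (x y : ℝ) :
    Tendsto (fun i ↦ N i * (1 - μ.real {ω | |X ω| ≤ β i + a i * x ∧
        ρ i * |X ω| + √(1 - ρ i ^ 2) * Y ω ≤ β i + a i * y}))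
      l (𝓝 (hueslerReissExponent lam x y)) := by
  have ha := h.tendsto_scale
  have hσ := tendsto_div_sqrt_one_sub_sq hlam ha hρ
  rw [← integral_exp_neg_mul_condExceedance_eq_hueslerReissExponent hlam]
  have hintercept :=
    tendsto_mul_sub_sub_div_sqrt_one_sub_sq hlam ha h.tendsto_scale_mul_loc hρ y
  have hslope := tendsto_mul_div_sqrt_one_sub_sq hlam ha hρ
  refine (h.tendsto_mul_integral_condExceedance hintercept hslope (by positivity) x).congr' ?_
  filter_upwards [ha.eventually self_mem_nhdsWithin,
    hσ.eventually_const_lt (u := 0) (by positivity)] with i hai hσi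
  have hσi' : 0 < √(1 - ρ i ^ 2) := (div_pos_iff_of_pos_left hai).1 hσi
  rw [measureReal_abs_le_and_le_eq hX hY hind hai hσi', sub_sub_cancel]

end HueslerReiss

section Norming

variable {ι : Type*} {l : Filter ι} {N a b : ι → ℝ}

lemma tendsto_atTop_of_tendsto_mul_stdNormalCDF_neg (hN : Tendsto N l atTop)
    (hb : Tendsto (fun i ↦ N i * Φ (-b i)) l (𝓝 1)) : Tendsto b l atTop := by
  refine tendsto_atTop_of_tendsto_stdNormalCDF_neg ((hb.div_atTop hN).congr' ?_)
  filter_upwards [hN.eventually_ne_atTop 0] with i hi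
  exact mul_div_cancel_left₀ _ hi

lemma tendsto_mul_gaussianPDFReal_div (hN : Tendsto N l atTop)
    (hb : Tendsto (fun i ↦ N i * Φ (-b i)) l (𝓝 1)) :
    Tendsto (fun i ↦ N i * (φ (b i) / b i)) l (𝓝 1) :=
  (IsEquivalent.refl.mul (stdNormalCDF_neg_isEquivalent.comp_tendsto
    (tendsto_atTop_of_tendsto_mul_stdNormalCDF_neg hN hb))).tendsto_nhds hb

lemma tendsto_div_sqrt_two_mul_log (hN : Tendsto N l atTop)
    (hb : Tendsto (fun i ↦ N i * Φ (-b i)) l (𝓝 1)) :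
    Tendsto (fun i ↦ b i / √(2 * log (N i))) l (𝓝 1) := by
  have hbtop := tendsto_atTop_of_tendsto_mul_stdNormalCDF_neg hN hb
  have hlogN := tendsto_log_atTop.comp hN
  have htail : (fun i ↦ (Φ (-b i))⁻¹) ~[l] N := by
    refine IsEquivalent.symm (isEquivalent_of_tendsto_one ?_)
    simpa only [Pi.div_def, div_inv_eq_mul] using hb
  have hsq : (fun i ↦ b i ^ 2 / 2) ~[l] fun i ↦ log (N i) := by
    refine (neg_log_stdNormalCDF_neg_isEquivalent.comp_tendsto hbtop).symm.trans ?_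
    simpa only [Function.comp_def, log_inv] using htail.log hN
  have hratio := (isEquivalent_iff_tendsto_one (hlogN.eventually_ne_atTop 0)).1 hsq
  have hsqrt := hratio.sqrt
  rw [sqrt_one] at hsqrt
  refine hsqrt.congr' ?_
  filter_upwards [hbtop.eventually_ge_atTop 0] with i hi
  rw [Pi.div_apply, div_div, sqrt_div (sq_nonneg _), sqrt_sq hi, Function.comp_apply]

lemma tendsto_one_div_sqrt_two_mul_log (hN : Tendsto N l atTop) :
    Tendsto (fun i ↦ 1 / √(2 * log (N i))) l (𝓝[>] 0) := by
  simp only [one_div]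
  exact tendsto_inv_atTop_nhdsGT_zero.comp (tendsto_sqrt_atTop.comp
    ((tendsto_log_atTop.comp hN).const_mul_atTop two_pos))

theorem isHalfNormalNorming_add_mul_log_two (hN : Tendsto N l atTop)
    (ha : ∀ i, a i = 1 / √(2 * log (N i))) (hb : Tendsto (fun i ↦ N i * Φ (-b i)) l (𝓝 1)) :
    IsHalfNormalNorming l N a (fun i ↦ b i + a i * log 2) := by
  have hscale : Tendsto a l (𝓝[>] 0) :=
    (tendsto_one_div_sqrt_two_mul_log hN).congr fun i ↦ (ha i).symm
  have ha0 : Tendsto a l (𝓝 0) := hscale.mono_right nhdsWithin_le_nhds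
  have hab : Tendsto (fun i ↦ a i * b i) l (𝓝 1) := by
    simpa only [ha, one_div_mul_eq_div] using tendsto_div_sqrt_two_mul_log hN hb
  refine ⟨hscale, ?_, ?_⟩
  · simpa [mul_add, ← mul_assoc] using hab.add ((ha0.mul ha0).mul_const (log 2))
  · have hdensity : Tendsto (fun i ↦ 2 * (N i * (φ (b i) / b i)) * (a i * b i)
        * (φ (b i + a i * log 2) / φ (b i))) l (𝓝 1) := by
      have hprod := (((tendsto_mul_gaussianPDFReal_div hN hb).const_mul 2).mul hab).mul
        (tendsto_gaussianPDFReal_add_mul_div ha0 hab (log 2))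
      simpa [exp_neg, exp_log] using hprod
    refine hdensity.congr' ?_
    filter_upwards [(tendsto_atTop_of_tendsto_mul_stdNormalCDF_neg hN hb).eventually_ne_atTop 0]
      with i hi
    have := (gaussianPDFReal_pos 0 1 (b i) one_ne_zero).ne'
    field_simp

lemma tendsto_mul_one_sub_stdNormalCDF_of_quantile {b : ℕ → ℝ}
    (hb : ∀ n : ℕ, 2 ≤ n → Φ (b n) = 1 - 1 / (n : ℝ)) :
    Tendsto (fun n : ℕ ↦ n * (1 - Φ (b n))) atTop (𝓝 1) := by
  refine tendsto_const_nhds.congr' ?_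
  filter_upwards [eventually_ge_atTop 2] with n hn
  have : (n : ℝ) ≠ 0 := by positivity
  rw [hb n hn, sub_sub_cancel, mul_one_div_cancel this]

end Norming

theorem gaussian_skew_maxima_HuslerReiss_general
    {Ω : Type*} [MeasurableSpace Ω] (μ : Measure Ω) [IsProbabilityMeasure μ] (X Y : Ω → ℝ)
    (hX : HasLaw X (gaussianReal 0 1) μ) (hY : HasLaw Y (gaussianReal 0 1) μ)
    (hindep : IndepFun X Y μ) (a b : ℕ → ℝ)
    (ha : ∀ n : ℕ, a n = 1 / √(2 * log n))
    (hb : Tendsto (fun n : ℕ ↦ n * (1 - Φ (b n))) atTop (𝓝 1))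
    (ρ : ℕ → ℝ) (lam : ℝ) (hlam : 0 < lam)
    (hHR : Tendsto (fun n : ℕ ↦ (1 - ρ n) * log n) atTop (𝓝 (lam ^ 2))) (x y : ℝ) :
    Tendsto (fun n : ℕ ↦
        μ.real {ω | |X ω| ≤ a n * x + b n + a n * log 2 ∧
          ρ n * |X ω| + √(1 - ρ n ^ 2) * Y ω ≤ a n * y + b n + a n * log 2} ^ n)
      atTop (𝓝 (exp (-hueslerReissExponent lam x y))) := by
  simp only [← stdNormalCDF_neg] at hb
  have hnorm := isHalfNormalNorming_add_mul_log_two tendsto_natCast_atTop_atTop ha hb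
  have hρ : Tendsto (fun n : ℕ ↦ (1 - ρ n) / a n ^ 2) atTop (𝓝 (2 * lam ^ 2)) := by
    refine (hHR.const_mul 2).congr fun n ↦ ?_
    rw [ha, one_div, inv_pow, sq_sqrt (mul_nonneg zero_le_two (log_natCast_nonneg n)),
      div_inv_eq_mul]
    ring
  have hlim := (hnorm.tendsto_mul_one_sub_measureReal hX hY hindep hlam hρ x y).neg
  simp only [← mul_neg, neg_sub] at hlim
  simpa only [add_sub_cancel, add_comm, add_left_comm, add_assoc] using
    tendsto_one_add_pow_exp_of_tendsto hlim

theorem gaussian_skew_maxima_HuslerReiss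
{Ω : Type*} [MeasurableSpace Ω] (μ : Measure Ω) [IsProbabilityMeasure μ]
    (X Y : Ω → ℝ) (hXm : Measurable X) (hYm : Measurable Y)
    (hXg : μ.map X = gaussianReal 0 1) (hYg : μ.map Y = gaussianReal 0 1)
    (hindep : IndepFun X Y μ)
    (a b : ℕ → ℝ)
    (ha : ∀ n : ℕ, a n = 1 / Real.sqrt (2 * Real.log n))
    (hb : ∀ n : ℕ, 2 ≤ n → stdNormalCDF (b n) = 1 - 1 / (n : ℝ))
    (ρ : ℕ → ℝ) (hρ : ∀ n, ρ n ∈ Ioc (0 : ℝ) 1)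
    (lam : ℝ) (hlam : 0 < lam)
    (hHR : Tendsto (fun n : ℕ => (1 - ρ n) * Real.log n) atTop (𝓝 (lam ^ 2))) :
    ∀ x y : ℝ,
      Tendsto (fun n : ℕ =>
          ((μ {ω | |X ω| ≤ a n * x + b n + a n * Real.log 2 ∧
            ρ n * |X ω| + Real.sqrt (1 - ρ n ^ 2) * Y ω ≤
              a n * y + b n + a n * Real.log 2}).toReal) ^ n)
        atTop (𝓝 (Real.exp (-(stdNormalCDF (lam + (x - y) / (2 * lam)) * Real.exp (-y) +
          stdNormalCDF (lam + (y - x) / (2 * lam)) * Real.exp (-x))))) :=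
  gaussian_skew_maxima_HuslerReiss_general μ X Y ⟨hXm.aemeasurable, hXg⟩ ⟨hYm.aemeasurable, hYg⟩
    hindep a b ha (tendsto_mul_one_sub_stdNormalCDF_of_quantile hb) ρ lam hlam hHR
end

section
/- Let a, b > 0 and define B̄(x) = ∫_{1-x}^{1} (Γ(a+b)/(Γ(a)·Γ(b)))·s^{a-1}·(1-s)^{b-1} ds for x ∈ (0,1), the upper tail of the Beta(a,b) distribution at 1-x. Then lim_{x↓0} B̄(x)/x^b = Γ(a+b)/(b·Γ(a)·Γ(b)), and moreover lim_{x↓0} ((Γ(a+b)/(b·Γ(a)·Γ(b)))·x^b - B̄(x))/x^{b+1} = (a-1)·Γ(a+b)/((b+1)·Γ(a)·Γ(b)); in particular, for every x > 0, lim_{t↓0} B̄(tx)/B̄(t) = x^b, i.e. the Beta(a,b) distribution is in the Weibull max-domain of attraction with index b. -/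
open MeasureTheory Filter Real Set Topology

/-!
Reflecting `s = 1 - u` turns the tail into `∫ u in 0..x, u ^ (b - 1) * g u` with
`g u = c * (1 - u) ^ (a - 1)`, whose factor `g` is differentiable at `0` with `g 0 = c` and
`g' 0 = -(a - 1) * c`. The expansion `g u = g 0 + u * g' 0 + o(u)` may be integrated term by term
against `u ^ (b - 1)`, since the integral over `(0, x]` of a function that is `o(u ^ q)` with
`-1 < q` is `o(x ^ (q + 1))`. All three limits are read off the resulting two-term expansion.
-/

open Asymptotics

lemma eventually_nhdsGT_forall_mem_Ioc {α : Type*} [LinearOrder α] [TopologicalSpace α]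
    [OrderTopology α] [NoMaxOrder α] [DenselyOrdered α] {a : α} {p : α → Prop}
    (h : ∀ᶠ u in 𝓝[>] a, p u) : ∀ᶠ x in 𝓝[>] a, ∀ u ∈ Ioc a x, p u := by
  obtain ⟨y, hay, hy⟩ := mem_nhdsGT_iff_exists_Ioc_subset.1 h
  filter_upwards [Ioc_mem_nhdsGT hay] with x hx u hu
  exact hy ⟨hu.1, hu.2.trans hx.2⟩

lemma integral_zero_rpow {q : ℝ} (hq : -1 < q) (x : ℝ) :
    ∫ u in (0 : ℝ)..x, u ^ q = x ^ (q + 1) / (q + 1) := by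
  rw [integral_rpow (Or.inl hq), zero_rpow (by linarith), sub_zero]

section IntegrationOfAsymptotics

variable {E : Type*} [NormedAddCommGroup E] [NormedSpace ℝ E]

lemma isLittleO_integral_of_isLittleO_rpow {f : ℝ → E} {q : ℝ} (hq : -1 < q)
    (hf : f =o[𝓝[>] 0] fun u => u ^ q) :
    (fun x => ∫ u in (0 : ℝ)..x, f u) =o[𝓝[>] 0] fun x => x ^ (q + 1) := by
  have hq' : 0 < q + 1 := by linarith
  refine IsLittleO.of_bound fun ε hε => ?_
  filter_upwards [self_mem_nhdsWithin,
    eventually_nhdsGT_forall_mem_Ioc (hf.def (mul_pos hε hq'))] with x (hx : 0 < x) hbound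
  calc ‖∫ u in (0 : ℝ)..x, f u‖
      ≤ ∫ u in (0 : ℝ)..x, ε * (q + 1) * u ^ q := by
        refine intervalIntegral.norm_integral_le_of_norm_le hx.le (.of_forall fun u hu => ?_)
          ((intervalIntegral.intervalIntegrable_rpow' hq).const_mul _)
        simpa only [norm_of_nonneg (rpow_nonneg hu.1.le q)] using hbound u hu
    _ = ε * ‖x ^ (q + 1)‖ := by
        rw [intervalIntegral.integral_const_mul, integral_zero_rpow hq,
          norm_of_nonneg (rpow_nonneg hx.le _)]
        field_simp

lemma eventually_intervalIntegrable_rpow_smul {g : ℝ → E} {q : ℝ} (hq : -1 < q)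
    (hgm : StronglyMeasurableAtFilter g (𝓝[>] 0))
    (hg : g =O[𝓝[>] 0] fun _ => (1 : ℝ)) :
    ∀ᶠ x in 𝓝[>] 0, IntervalIntegrable (fun u => u ^ q • g u) volume 0 x := by
  have hrpow : IntegrableAtFilter (fun u : ℝ => u ^ q) (𝓝[>] 0) :=
    ⟨Ioc 0 1, Ioc_mem_nhdsGT one_pos, (intervalIntegral.intervalIntegrable_rpow' hq).1⟩
  have hmeas : StronglyMeasurableAtFilter (fun u => u ^ q • g u) (𝓝[>] 0) := by
    obtain ⟨s, hs, hgs⟩ := hgm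
    exact ⟨s, hs, (measurable_id.pow_const q).aestronglyMeasurable.smul hgs⟩
  have hbigO : (fun u => u ^ q • g u) =O[𝓝[>] 0] fun u => u ^ q := by
    simpa only [smul_eq_mul, mul_one] using (isBigO_refl (fun u : ℝ => u ^ q) (𝓝[>] 0)).smul hg
  obtain ⟨s, hs, hint⟩ := hbigO.integrableAtFilter hmeas hrpow
  filter_upwards [self_mem_nhdsWithin, eventually_nhdsGT_forall_mem_Ioc hs] with x (hx : 0 < x) hxs
  exact (intervalIntegrable_iff_integrableOn_Ioc_of_le hx.le).2 (hint.mono_set hxs)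

lemma isLittleO_integral_rpow_smul_sub [CompleteSpace E] {g : ℝ → E} {g' : E} {b : ℝ} (hb : 0 < b)
    (hgm : StronglyMeasurableAtFilter g (𝓝[>] 0)) (hg : HasDerivWithinAt g g' (Ioi 0) 0) :
    (fun x => (∫ u in (0 : ℝ)..x, u ^ (b - 1) • g u) -
        ((x ^ b / b) • g 0 + (x ^ (b + 1) / (b + 1)) • g')) =o[𝓝[>] 0] fun x => x ^ (b + 1) := by
  have hb₁ : -1 < b - 1 := by linarith
  have hb₀ : -1 < b := by linarith
  have hremainder : (fun u => u ^ (b - 1) • g u - (u ^ (b - 1) • g 0 + u ^ b • g'))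
      =o[𝓝[>] 0] fun u => u ^ b := by
    refine ((isBigO_refl (fun u : ℝ => u ^ (b - 1)) _).smul_isLittleO
      (hasDerivWithinAt_iff_isLittleO.1 hg)).congr' ?_ ?_ <;>
    filter_upwards [self_mem_nhdsWithin] with u (hu : 0 < u)
    · rw [sub_zero, smul_sub, smul_sub, smul_smul, ← rpow_add_one hu.ne', sub_add_cancel, sub_sub]
    · rw [sub_zero, smul_eq_mul, ← rpow_add_one hu.ne', sub_add_cancel]
  refine (isLittleO_integral_of_isLittleO_rpow hb₀ hremainder).congr' ?_ .rfl
  filter_upwards [eventually_intervalIntegrable_rpow_smul hb₁ hgm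
    (hg.continuousWithinAt.isBigO_one ℝ)] with x hgx
  have hint {q : ℝ} (hq : -1 < q) (v : E) :
      IntervalIntegrable (fun u : ℝ => u ^ q • v) volume 0 x :=
    (intervalIntegral.intervalIntegrable_rpow' hq).smul_continuousOn continuousOn_const
  rw [intervalIntegral.integral_sub hgx ((hint hb₁ _).add (hint hb₀ _)),
    intervalIntegral.integral_add (hint hb₁ _) (hint hb₀ _),
    intervalIntegral.integral_smul_const, intervalIntegral.integral_smul_const,
    integral_zero_rpow hb₁, integral_zero_rpow hb₀, sub_add_cancel]

lemma setIntegral_Ioc_sub_eq_intervalIntegral (f : ℝ → E) (d : ℝ) {x : ℝ} (hx : 0 ≤ x) :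
    ∫ s in Ioc (d - x) d, f s = ∫ u in (0 : ℝ)..x, f (d - u) := by
  rw [intervalIntegral.integral_comp_sub_left, sub_zero,
    intervalIntegral.integral_of_le (sub_le_self d hx)]

end IntegrationOfAsymptotics

section PowerAsymptotics

variable {F : ℝ → ℝ} {A D p : ℝ}

lemma tendsto_sub_div_rpow_add_one
    (hF : (fun x => F x - (A * x ^ p + D * x ^ (p + 1))) =o[𝓝[>] 0] fun x => x ^ (p + 1)) :
    Tendsto (fun x => (F x - A * x ^ p) / x ^ (p + 1)) (𝓝[>] 0) (𝓝 D) := by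
  rw [← zero_add D]
  refine (hF.tendsto_div_nhds_zero.add_const D).congr' ?_
  filter_upwards [self_mem_nhdsWithin] with x (hx : 0 < x)
  have := (rpow_pos_of_pos hx (p + 1)).ne'
  field_simp
  ring

lemma tendsto_div_rpow_of_tendsto_sub_div_rpow_add_one
    (hF : Tendsto (fun x => (F x - A * x ^ p) / x ^ (p + 1)) (𝓝[>] 0) (𝓝 D)) :
    Tendsto (fun x => F x / x ^ p) (𝓝[>] 0) (𝓝 A) := by
  have hid : Tendsto (fun x : ℝ => x) (𝓝[>] 0) (𝓝 0) := nhdsWithin_le_nhds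
  have hlim := (hid.mul hF).const_add A
  rw [zero_mul, add_zero] at hlim
  refine hlim.congr' ?_
  filter_upwards [self_mem_nhdsWithin] with x (hx : 0 < x)
  have := (rpow_pos_of_pos hx p).ne'
  rw [rpow_add_one hx.ne']
  field_simp
  ring

lemma tendsto_comp_mul_div_of_tendsto_div_rpow (hA : A ≠ 0)
    (hF : Tendsto (fun x => F x / x ^ p) (𝓝[>] 0) (𝓝 A)) {x : ℝ} (hx : 0 < x) :
    Tendsto (fun t => F (t * x) / F t) (𝓝[>] 0) (𝓝 (x ^ p)) := by
  have hscale : Tendsto (fun t : ℝ => t * x) (𝓝[>] 0) (𝓝[>] 0) := by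
    simpa only [mul_comm x] using tendsto_iff_comap.2 (comap_mulLeft_nhdsGT_zero hx).ge
  have hlim := ((hF.comp hscale).div hF hA).mul_const (x ^ p)
  rw [div_self hA, one_mul] at hlim
  refine hlim.congr' ?_
  filter_upwards [self_mem_nhdsWithin] with t (ht : 0 < t)
  have htp := (rpow_pos_of_pos ht p).ne'
  have hxp := (rpow_pos_of_pos hx p).ne'
  simp only [Function.comp_apply, Pi.div_apply, mul_rpow ht.le hx.le]
  rw [mul_comm (t ^ p), ← div_div, div_div_div_cancel_right₀ htp, div_right_comm,
    div_mul_cancel₀ _ hxp]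

end PowerAsymptotics

lemma hasDerivAt_one_sub_rpow_at_zero (r : ℝ) : HasDerivAt (fun u : ℝ => (1 - u) ^ r) (-r) 0 := by
  simpa using ((hasDerivAt_id (0 : ℝ)).const_sub 1).rpow_const (p := r) (Or.inl (by simp))

lemma isLittleO_betaTail_sub (a c : ℝ) {b : ℝ} (hb : 0 < b) :
    (fun x => (∫ s in Ioc (1 - x) 1, c * s ^ (a - 1) * (1 - s) ^ (b - 1)) -
        (c / b * x ^ b + -((a - 1) * c / (b + 1)) * x ^ (b + 1)))
      =o[𝓝[>] 0] fun x => x ^ (b + 1) := by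
  have hderiv :=
    ((hasDerivAt_one_sub_rpow_at_zero (a - 1)).const_mul c).hasDerivWithinAt (s := Ioi 0)
  have hmeas : Measurable fun u : ℝ => c * (1 - u) ^ (a - 1) := by fun_prop
  refine (isLittleO_integral_rpow_smul_sub hb
    hmeas.stronglyMeasurable.stronglyMeasurableAtFilter hderiv).congr' ?_ .rfl
  filter_upwards [self_mem_nhdsWithin] with x (hx : 0 < x)
  rw [setIntegral_Ioc_sub_eq_intervalIntegral _ 1 hx.le]
  simp only [smul_eq_mul, sub_sub_cancel, sub_zero, one_rpow, mul_comm (_ ^ (b - 1))]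
  ring

theorem beta_weibull_mda_general (a : ℝ) {b c : ℝ} (hb : 0 < b) (hc : c ≠ 0) (Bbar : ℝ → ℝ)
    (hB : ∀ x, Bbar x = ∫ s in Ioc (1 - x) 1, c * s ^ (a - 1) * (1 - s) ^ (b - 1)) :
    Tendsto (fun x => Bbar x / x ^ b) (𝓝[>] 0) (𝓝 (c / b)) ∧
    Tendsto (fun x => (c / b * x ^ b - Bbar x) / x ^ (b + 1)) (𝓝[>] 0)
      (𝓝 ((a - 1) * c / (b + 1))) ∧
    ∀ x > (0 : ℝ), Tendsto (fun t => Bbar (t * x) / Bbar t) (𝓝[>] 0) (𝓝 (x ^ b)) := by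
  obtain rfl := funext hB
  have hsecond := tendsto_sub_div_rpow_add_one (isLittleO_betaTail_sub a c hb)
  have hfirst := tendsto_div_rpow_of_tendsto_sub_div_rpow_add_one hsecond
  refine ⟨hfirst, ?_, fun x hx =>
    tendsto_comp_mul_div_of_tendsto_div_rpow (div_ne_zero hc hb.ne') hfirst hx⟩
  simpa only [← neg_div, neg_sub, neg_neg] using hsecond.neg

theorem beta_weibull_mda (a b : ℝ) (ha : 0 < a) (hb : 0 < b)
    (Bbar : ℝ → ℝ)
    (hB : ∀ x, Bbar x = ∫ s in Set.Ioc (1 - x) 1,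
        Real.Gamma (a + b) / (Real.Gamma a * Real.Gamma b) * s ^ (a - 1) * (1 - s) ^ (b - 1)) :
    Tendsto (fun x => Bbar x / x ^ b) (nhdsWithin 0 (Ioi 0))
        (𝓝 (Real.Gamma (a + b) / (b * Real.Gamma a * Real.Gamma b))) ∧
    Tendsto (fun x =>
        (Real.Gamma (a + b) / (b * Real.Gamma a * Real.Gamma b) * x ^ b - Bbar x) / x ^ (b + 1))
      (nhdsWithin 0 (Ioi 0))
      (𝓝 ((a - 1) * Real.Gamma (a + b) / ((b + 1) * Real.Gamma a * Real.Gamma b))) ∧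
    ∀ x > (0 : ℝ),
      Tendsto (fun t => Bbar (t * x) / Bbar t) (nhdsWithin 0 (Ioi 0)) (𝓝 (x ^ b)) := by
  simpa only [mul_div_assoc', div_div, mul_comm (_ * _) b, mul_comm (_ * _) (b + 1), ← mul_assoc]
    using beta_weibull_mda_general a hb (by positivity) Bbar hB
end
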